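/- arXiv:math/0408181 — 3 statements merged into one kernel-verified Lean document; each statement's English description precedes it below -/
import Mathlib

section
/- Let k be a field, m ≤ n positive integers, and R = k[X]/(X^n). The objects (0, R) and (X^{n−m}·R, R) of S_m(k[T]/T^n) are relatively injective, and conversely every indecomposable relatively injective object of S_m(k[T]/T^n) is isomorphic to (0, R) or to (X^{n−m}·R, R). -/
open Polynomial

noncomputable section

/-- An object of the submodule category `Sₘ(k[T]/Tⁿ)`: a pair `(A, B)` where `B` is a
finite-dimensional module over `R = k[X]/(Xⁿ)` — encoded as a finite `k[X]`-module
annihilated by `Xⁿ` — together with an `R`-submodule `A ⊆ B` with `Xᵐ • A = 0`. -/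
structure SPair (k : Type) [Field k] (m n : ℕ) : Type 1 where
  B : Type
  [addCommGroup : AddCommGroup B]
  [module : Module (Polynomial k) B]
  [finite : Module.Finite (Polynomial k) B]
  bound : ∀ b : B, (X : Polynomial k) ^ n • b = 0
  A : Submodule (Polynomial k) B
  subBound : ∀ a ∈ A, (X : Polynomial k) ^ m • a = 0

attribute [instance] SPair.addCommGroup SPair.module SPair.finite

namespace SPair

variable {k : Type} [Field k] {m n : ℕ}

/-- Isomorphism of pairs: an `R`-linear isomorphism of the ambient modules mapping the one
submodule onto the other. -/
def Iso (M N : SPair k m n) : Prop :=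
  ∃ e : M.B ≃ₗ[Polynomial k] N.B, M.A.map e.toLinearMap = N.A

/-- A pair `(A, B)` is indecomposable if `B ≠ 0` and for every internal direct sum
decomposition `B = B₁ ⊕ B₂` with `A = (A ∩ B₁) ⊕ (A ∩ B₂)`, one of `B₁`, `B₂` is zero. -/
def Indec (M : SPair k m n) : Prop :=
  (∃ b : M.B, b ≠ 0) ∧
    ∀ B₁ B₂ : Submodule (Polynomial k) M.B,
      B₁ ⊓ B₂ = ⊥ → B₁ ⊔ B₂ = ⊤ → M.A = M.A ⊓ B₁ ⊔ M.A ⊓ B₂ → B₁ = ⊥ ∨ B₂ = ⊥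

end SPair

/-- The cyclic module `k[X]/(Xⁱ)`, as a module over `k[X]`. -/
abbrev Bq (k : Type) [Field k] (i : ℕ) : Type :=
  Polynomial k ⧸ (Ideal.span {(X : Polynomial k) ^ i} : Ideal (Polynomial k))

instance (k : Type) [Field k] (i : ℕ) : Module.Finite (Polynomial k) (Bq k i) :=
  Module.Finite.of_surjective (Submodule.mkQ _) (Submodule.mkQ_surjective _)

theorem Bq_bound (k : Type) [Field k] {i n : ℕ} (h : i ≤ n) (b : Bq k i) :
    (X : Polynomial k) ^ n • b = 0 := by
  obtain ⟨p, rfl⟩ := Submodule.Quotient.mk_surjective _ b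
  rw [← Submodule.Quotient.mk_smul, Submodule.Quotient.mk_eq_zero, smul_eq_mul]
  exact Ideal.mem_span_singleton.mpr ((pow_dvd_pow X h).mul_right p)

theorem Bq_smul_mk (k : Type) [Field k] {i j r : ℕ} (h : i ≤ j + r) :
    (X : Polynomial k) ^ r • (Submodule.Quotient.mk (X ^ j) : Bq k i) = 0 := by
  rw [← Submodule.Quotient.mk_smul, Submodule.Quotient.mk_eq_zero, smul_eq_mul, ← pow_add]
  exact Ideal.mem_span_singleton.mpr (pow_dvd_pow X (by omega))

theorem span_smul_eq_zero {k : Type} [Field k] {B : Type} [AddCommGroup B]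
    [Module (Polynomial k) B] (r : Polynomial k) {S : Set B} (h : ∀ v ∈ S, r • v = 0) :
    ∀ a ∈ Submodule.span (Polynomial k) S, r • a = 0 := by
  intro a ha
  induction ha using Submodule.span_induction with
  | mem v hv => exact h v hv
  | zero => simp
  | add x y _ _ hx hy => rw [smul_add, hx, hy, add_zero]
  | smul c x _ hx => rw [smul_smul, mul_comm, ← smul_smul, hx, smul_zero]

/-- The pair `(0 ⊆ k[X]/(Xⁱ))` as an object of `Sₘ(k[T]/Tⁿ)`. -/
def pairZero (k : Type) [Field k] (m n i : ℕ) (h : i ≤ n) : SPair k m n where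
  B := Bq k i
  bound := fun b => Bq_bound k h b
  A := ⊥
  subBound := fun a ha => by rw [(Submodule.mem_bot _).mp ha, smul_zero]

/-- The pair `(⟨Xʲ⟩ ⊆ k[X]/(Xⁱ))` as an object of `Sₘ(k[T]/Tⁿ)`. -/
def pairCyc (k : Type) [Field k] (m n i j : ℕ) (h : i ≤ n) (hj : i ≤ j + m) : SPair k m n where
  B := Bq k i
  bound := fun b => Bq_bound k h b
  A := Submodule.span (Polynomial k) {(Submodule.Quotient.mk (X ^ j) : Bq k i)}
  subBound := fun a ha =>
    span_smul_eq_zero _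
      (fun v hv => by rw [Set.mem_singleton_iff] at hv; rw [hv]; exact Bq_smul_mk k hj) a ha

/-- Relative injectivity in the exact category `Sₘ(k[T]/Tⁿ)`: every inflation out of the
object (an `R`-linear injection `f : B → B'` with `f(A) = A' ∩ im f`) admits a retraction
`π` with `π ∘ f = id` and `π(A') ⊆ A`. -/
def SPair.RelInjective {k : Type} [Field k] {m n : ℕ} (M : SPair k m n) : Prop :=
  ∀ (N : SPair k m n) (f : M.B →ₗ[Polynomial k] N.B),
    Function.Injective f → M.A.map f = N.A ⊓ LinearMap.range f →
    ∃ π : N.B →ₗ[Polynomial k] M.B, π ∘ₗ f = LinearMap.id ∧ N.A.map π ≤ M.A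

namespace RelInjAux

variable {k : Type} [Field k]

theorem dvd_of_smul_eq_zero {B : Type} [AddCommGroup B] [Module (Polynomial k) B] {n : ℕ}
    {b : B} (h0 : (X : Polynomial k) ^ n • b = 0) (h1 : (X : Polynomial k) ^ (n - 1) • b ≠ 0)
    {p : Polynomial k} (hp : p • b = 0) : (X : Polynomial k) ^ n ∣ p := by
  obtain ⟨d, hd⟩ := (IsPrincipalIdealRing.principal (Ideal.torsionOf (Polynomial k) B b)).principal
  have key : ∀ q : Polynomial k, q • b = 0 ↔ d ∣ q := by
    intro q
    rw [← Ideal.mem_torsionOf_iff, hd]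
    exact Ideal.mem_span_singleton
  obtain ⟨i, hi, hdi⟩ := (dvd_prime_pow prime_X n).1 ((key _).1 h0)
  have hin : n ≤ i := by
    by_contra hlt
    exact h1 ((key _).2 (hdi.dvd.trans (pow_dvd_pow X (by omega))))
  exact ((pow_dvd_pow X hin).trans hdi.symm.dvd).trans ((key _).1 hp)

theorem exists_compl {B : Type} [AddCommGroup B] [Module (Polynomial k) B]
    [Module.Finite (Polynomial k) B] {n : ℕ} (hn : 0 < n)
    (hB : ∀ b : B, (X : Polynomial k) ^ n • b = 0)
    {b : B} (h1 : (X : Polynomial k) ^ (n - 1) • b ≠ 0) :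
    ∃ D : Submodule (Polynomial k) B, IsCompl (Submodule.span (Polynomial k) {b}) D := by
  set S := Submodule.span (Polynomial k) {b} with hS
  obtain ⟨D, hD, hmax⟩ := WellFounded.has_min
    (wellFounded_gt : WellFounded ((· > ·) : Submodule (Polynomial k) B → _ → Prop))
    {D | Disjoint S D} ⟨⊥, disjoint_bot_right⟩
  refine ⟨D, hD, ?_⟩
  by_contra hcod
  rw [codisjoint_iff] at hcod
  obtain ⟨z, hz⟩ : ∃ z, z ∉ S ⊔ D := by
    by_contra! hall
    exact hcod (eq_top_iff.2 fun z _ => hall z)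
  classical
  have hex : ∃ j, (X : Polynomial k) ^ j • z ∈ S ⊔ D := ⟨n, by rw [hB]; exact zero_mem _⟩
  obtain ⟨x, hx, hXx⟩ : ∃ x, x ∉ S ⊔ D ∧ (X : Polynomial k) • x ∈ S ⊔ D := by
    have hpos : Nat.find hex ≠ 0 := by
      intro h
      have := Nat.find_spec hex
      rw [h, pow_zero, one_smul] at this
      exact hz this
    refine ⟨(X : Polynomial k) ^ (Nat.find hex - 1) • z, Nat.find_min hex (by omega), ?_⟩
    rw [smul_smul, ← pow_succ', Nat.sub_add_cancel (by omega)]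
    exact Nat.find_spec hex
  obtain ⟨s, hs, c, hc, hsc⟩ := Submodule.mem_sup.1 hXx
  obtain ⟨p, rfl⟩ := Submodule.mem_span_singleton.1 hs
  have hzero : ((X : Polynomial k) ^ (n - 1) * p) • b = 0 := by
    have e : (X : Polynomial k) ^ (n - 1) • (p • b) + (X : Polynomial k) ^ (n - 1) • c = 0 := by
      rw [← smul_add, hsc, smul_smul, ← pow_succ, Nat.sub_add_cancel hn, hB]
    rw [mul_smul]
    refine (Submodule.disjoint_def.1 hD) _ (S.smul_mem _ hs) ?_
    rw [eq_neg_of_add_eq_zero_left e]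
    exact D.neg_mem (D.smul_mem _ hc)
  have hdvd := dvd_of_smul_eq_zero (hB b) h1 hzero
  obtain ⟨q, rfl⟩ : (X : Polynomial k) ∣ p := by
    have e : (X : Polynomial k) ^ n = X ^ (n - 1) * X := by
      rw [← pow_succ, Nat.sub_add_cancel hn]
    rw [e] at hdvd
    exact (mul_dvd_mul_iff_left (pow_ne_zero _ X_ne_zero)).1 hdvd
  have hbS : b ∈ S := Submodule.mem_span_singleton_self b
  set y := x - q • b with hy
  have hyn : y ∉ S ⊔ D := by
    intro h
    apply hx
    have : x = y + q • b := by rw [hy]; abel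
    rw [this]
    exact add_mem h (Submodule.mem_sup_left (S.smul_mem _ hbS))
  have hXy : (X : Polynomial k) • y ∈ D := by
    have : (X : Polynomial k) • y = c := by
      rw [hy, smul_sub, ← hsc, smul_smul]; abel
    rw [this]; exact hc
  refine hmax (D ⊔ Submodule.span (Polynomial k) {y}) ?_ ?_
  · change Disjoint S _
    rw [Submodule.disjoint_def]
    intro w hwS hw
    obtain ⟨cd, hcd, t, ht, rfl⟩ := Submodule.mem_sup.1 hw
    obtain ⟨r, rfl⟩ := Submodule.mem_span_singleton.1 ht
    have hr : r • y = r.divX • (X : Polynomial k) • y + C (r.coeff 0) • y := by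
      rw [smul_smul, ← add_smul, divX_mul_X_add]
    rw [hr, ← add_assoc] at hwS ⊢
    have hcy : cd + r.divX • (X : Polynomial k) • y ∈ D := add_mem hcd (D.smul_mem _ hXy)
    by_cases ha : r.coeff 0 = 0
    · rw [ha, C_0, zero_smul, add_zero] at hwS ⊢
      exact (Submodule.disjoint_def.1 hD) _ hwS hcy
    · exfalso
      apply hyn
      have h2 : C (r.coeff 0) • y ∈ S ⊔ D := by
        have := sub_mem (Submodule.mem_sup_left hwS : _ ∈ S ⊔ D) (Submodule.mem_sup_right hcy)
        simpa using this
      have h3 := (S ⊔ D).smul_mem (C (r.coeff 0)⁻¹) h2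
      rwa [smul_smul, ← C_mul, inv_mul_cancel₀ ha, C_1, one_smul] at h3
  · refine lt_of_le_of_ne le_sup_left ?_
    intro h
    apply hyn
    apply Submodule.mem_sup_right
    rw [h]
    exact Submodule.mem_sup_right (Submodule.mem_span_singleton_self y)

/-- The map `k[X]/(Xⁿ) → B` sending `1` to `b`. -/
def toB {B : Type} [AddCommGroup B] [Module (Polynomial k) B] {n : ℕ}
    (b : B) (hb : (X : Polynomial k) ^ n • b = 0) : Bq k n →ₗ[Polynomial k] B :=
  Submodule.liftQ _ (LinearMap.toSpanSingleton (Polynomial k) B b) (by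
    intro p hp
    obtain ⟨q, rfl⟩ := Ideal.mem_span_singleton.1 hp
    rw [LinearMap.mem_ker, LinearMap.toSpanSingleton_apply, mul_comm, mul_smul, hb, smul_zero])

theorem toB_mk {B : Type} [AddCommGroup B] [Module (Polynomial k) B] {n : ℕ}
    (b : B) (hb : (X : Polynomial k) ^ n • b = 0) (p : Polynomial k) :
    toB b hb (Submodule.Quotient.mk p) = p • b := rfl

theorem mk_eq_smul (n : ℕ) (p : Polynomial k) :
    (Submodule.Quotient.mk p : Bq k n) = p • (Submodule.Quotient.mk 1 : Bq k n) := by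
  rw [← Submodule.Quotient.mk_smul, smul_eq_mul, mul_one]

theorem pow_smul_one_ne {n : ℕ} (hn : 0 < n) :
    (X : Polynomial k) ^ (n - 1) • (Submodule.Quotient.mk 1 : Bq k n) ≠ 0 := by
  rw [← mk_eq_smul]
  intro h
  rw [Submodule.Quotient.mk_eq_zero, Ideal.mem_span_singleton,
    pow_dvd_pow_iff X_ne_zero not_isUnit_X] at h
  omega

theorem exists_retract {B : Type} [AddCommGroup B] [Module (Polynomial k) B]
    [Module.Finite (Polynomial k) B] {n : ℕ} (hn : 0 < n)
    (hB : ∀ b : B, (X : Polynomial k) ^ n • b = 0)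
    (f : Bq k n →ₗ[Polynomial k] B) (hf : Function.Injective f) :
    ∃ π : B →ₗ[Polynomial k] Bq k n, π ∘ₗ f = LinearMap.id := by
  have h1 : (X : Polynomial k) ^ (n - 1) • f (Submodule.Quotient.mk 1) ≠ 0 := by
    rw [← map_smul]
    intro h
    exact pow_smul_one_ne hn (hf (h.trans (map_zero f).symm))
  obtain ⟨D, hD⟩ := exists_compl hn hB h1
  have hr : LinearMap.range f = Submodule.span (Polynomial k) {f (Submodule.Quotient.mk 1)} := by
    apply le_antisymm
    · rintro _ ⟨x, rfl⟩
      obtain ⟨p, rfl⟩ := Submodule.Quotient.mk_surjective _ x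
      refine Submodule.mem_span_singleton.2 ⟨p, ?_⟩
      rw [mk_eq_smul n p, map_smul]
    · rw [Submodule.span_singleton_le_iff_mem]
      exact LinearMap.mem_range_self f _
  rw [← hr] at hD
  exact ⟨LinearMap.linearProjOfIsCompl D f hf hD,
    LinearMap.ext fun x => LinearMap.linearProjOfIsCompl_apply_left (q := D) f hf hD x⟩

theorem isArtinian_of_bound {B : Type} [AddCommGroup B] [Module (Polynomial k) B]
    [Module.Finite (Polynomial k) B] {n : ℕ}
    (hB : ∀ b : B, (X : Polynomial k) ^ n • b = 0) : IsArtinian (Polynomial k) B := by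
  have : Module.Finite k (Bq k n) := (monic_X_pow n).finite_quotient
  have : IsArtinian (Polynomial k) (Bq k n) := isArtinian_of_tower k inferInstance
  obtain ⟨r, g, hg⟩ := Module.Finite.exists_fin' (Polynomial k) B
  let Φ : (Fin r → Bq k n) →ₗ[Polynomial k] B :=
    ∑ i, (toB (g (Pi.single i 1)) (hB _)) ∘ₗ LinearMap.proj i
  refine isArtinian_of_surjective _ Φ ?_
  intro b
  obtain ⟨v, rfl⟩ := hg b
  refine ⟨fun i => Submodule.Quotient.mk (v i), ?_⟩
  simp only [Φ, LinearMap.sum_apply, LinearMap.comp_apply, LinearMap.proj_apply, toB_mk]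
  conv_rhs => rw [pi_eq_sum_univ' v, map_sum]
  refine Finset.sum_congr rfl fun i _ => ?_
  rw [← map_smul]

theorem mem_span_of_smul {m n : ℕ} (hmn : m ≤ n) (x : Bq k n)
    (hx : (X : Polynomial k) ^ m • x = 0) :
    x ∈ Submodule.span (Polynomial k) {(Submodule.Quotient.mk (X ^ (n - m)) : Bq k n)} := by
  obtain ⟨p, rfl⟩ := Submodule.Quotient.mk_surjective _ x
  rw [← Submodule.Quotient.mk_smul, Submodule.Quotient.mk_eq_zero, smul_eq_mul,
    Ideal.mem_span_singleton] at hx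
  have e : (X : Polynomial k) ^ n = X ^ m * X ^ (n - m) := by
    rw [← pow_add, Nat.add_sub_cancel' hmn]
  rw [e] at hx
  obtain ⟨q, rfl⟩ := (mul_dvd_mul_iff_left (pow_ne_zero _ X_ne_zero)).1 hx
  refine Submodule.mem_span_singleton.2 ⟨q, ?_⟩
  rw [← Submodule.Quotient.mk_smul, smul_eq_mul, mul_comm]

theorem zero_relInjective {m n : ℕ} (hn : 0 < n) : (pairZero k m n n le_rfl).RelInjective := by
  intro N f hf hA
  have hAbot : N.A ⊓ LinearMap.range f = ⊥ := by
    rw [← hA]; exact Submodule.map_bot f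
  have hinj : Function.Injective (N.A.mkQ ∘ₗ f) := by
    rw [← LinearMap.ker_eq_bot, LinearMap.ker_eq_bot']
    intro x hx
    have h1 : f x ∈ N.A := (Submodule.Quotient.mk_eq_zero _).1 hx
    have h2 : f x ∈ N.A ⊓ LinearMap.range f := ⟨h1, x, rfl⟩
    rw [hAbot, Submodule.mem_bot] at h2
    exact hf (h2.trans (map_zero f).symm)
  have hB : ∀ b : N.B ⧸ N.A, (X : Polynomial k) ^ n • b = 0 := by
    intro b
    obtain ⟨b, rfl⟩ := Submodule.Quotient.mk_surjective _ b
    rw [← Submodule.Quotient.mk_smul, N.bound, Submodule.Quotient.mk_zero]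
  obtain ⟨π, hπ⟩ := exists_retract hn hB _ hinj
  refine ⟨π ∘ₗ N.A.mkQ, hπ, ?_⟩
  rintro _ ⟨a, ha, rfl⟩
  have : N.A.mkQ a = 0 := (Submodule.Quotient.mk_eq_zero _).2 ha
  have h0 : π (N.A.mkQ a) = 0 := by rw [this, map_zero]
  exact (Submodule.mem_bot (Polynomial k) (M := Bq k n)).2 h0

theorem cyc_relInjective {m n : ℕ} (hn : 0 < n) (hmn : m ≤ n) (h : n ≤ n - m + m) :
    (pairCyc k m n n (n - m) le_rfl h).RelInjective := by
  intro N f hf hA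
  obtain ⟨π, hπ⟩ := exists_retract hn N.bound f hf
  refine ⟨π, hπ, ?_⟩
  rintro _ ⟨a, ha, rfl⟩
  refine mem_span_of_smul hmn (π a) ?_
  rw [← map_smul, N.subBound a ha, map_zero]

/-- A relatively injective object has an element of maximal order. -/
theorem exists_maxOrder {m n : ℕ} (hn : 0 < n) (M : SPair k m n) (hne : ∃ b : M.B, b ≠ 0)
    (hM : M.RelInjective) : ∃ b : M.B, (X : Polynomial k) ^ (n - 1) • b ≠ 0 := by
  by_contra! hall
  obtain ⟨r, g, hg⟩ := Module.Finite.exists_fin' (Polynomial k) M.B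
  let μ : (Fin r → Polynomial k) →ₗ[Polynomial k] (Fin r → Polynomial k) :=
    LinearMap.lsmul (Polynomial k) _ X
  have hμ : ∀ v, μ v = (X : Polynomial k) • v := fun v => rfl
  have hμi : ∀ v w, μ v = μ w → v = w := by
    intro v w h
    ext1 i
    have := congrFun h i
    simp only [hμ, Pi.smul_apply, smul_eq_mul] at this
    exact mul_left_cancel₀ X_ne_zero this
  let K := (LinearMap.ker g).map μ
  let φ : ((Fin r → Polynomial k) ⧸ LinearMap.ker g) →ₗ[Polynomial k]
      ((Fin r → Polynomial k) ⧸ K) :=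
    Submodule.mapQ _ _ μ (Submodule.le_comap_map _ _)
  let e := g.quotKerEquivOfSurjective hg
  let f : M.B →ₗ[Polynomial k] ((Fin r → Polynomial k) ⧸ K) := φ ∘ₗ e.symm.toLinearMap
  have hfg : ∀ v, f (g v) = Submodule.Quotient.mk (μ v) := by
    intro v
    have : e.symm (g v) = Submodule.Quotient.mk v := by
      rw [LinearEquiv.symm_apply_eq]; rfl
    change φ (e.symm (g v)) = _
    rw [this]; rfl
  have hf : Function.Injective f := by
    rw [← LinearMap.ker_eq_bot, LinearMap.ker_eq_bot']
    intro b hb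
    obtain ⟨v, rfl⟩ := hg b
    rw [hfg, Submodule.Quotient.mk_eq_zero] at hb
    obtain ⟨w, hw, hwv⟩ := hb
    rw [← hμi _ _ hwv]
    exact hw
  have hbd : ∀ b : (Fin r → Polynomial k) ⧸ K, (X : Polynomial k) ^ n • b = 0 := by
    intro b
    obtain ⟨v, rfl⟩ := Submodule.Quotient.mk_surjective _ b
    rw [← Submodule.Quotient.mk_smul, Submodule.Quotient.mk_eq_zero]
    refine ⟨(X : Polynomial k) ^ (n - 1) • v, ?_, ?_⟩
    · change g _ = 0
      rw [map_smul, hall]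
    · rw [hμ, smul_smul, ← pow_succ', Nat.sub_add_cancel hn]
  let N : SPair k m n :=
    { B := (Fin r → Polynomial k) ⧸ K
      bound := hbd
      A := M.A.map f
      subBound := by
        rintro _ ⟨a, ha, rfl⟩
        rw [← map_smul, M.subBound a ha, map_zero] }
  obtain ⟨π, hπ, -⟩ := hM N f hf (inf_eq_left.2 (LinearMap.map_le_range)).symm
  have hdiv : ∀ b : M.B, ∃ c, b = (X : Polynomial k) • c := by
    intro b
    obtain ⟨v, rfl⟩ := hg b
    refine ⟨π (Submodule.Quotient.mk v), ?_⟩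
    have h1 : π (f (g v)) = g v := LinearMap.congr_fun hπ (g v)
    rw [← h1, ← map_smul, hfg, hμ, Submodule.Quotient.mk_smul]
  have hdivn : ∀ j : ℕ, ∀ b : M.B, ∃ c, b = (X : Polynomial k) ^ j • c := by
    intro j
    induction j with
    | zero => intro b; exact ⟨b, by simp⟩
    | succ j ih =>
      intro b
      obtain ⟨c, rfl⟩ := ih b
      obtain ⟨d, rfl⟩ := hdiv c
      exact ⟨d, by rw [smul_smul, pow_succ]⟩
  obtain ⟨b, hb⟩ := hne
  obtain ⟨c, rfl⟩ := hdivn n b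
  exact hb (M.bound c)

/-- An indecomposable relatively injective pair `(A, B)` has `A = 0` or `A = B[Xᵐ]`. -/
theorem dichotomy {m n : ℕ} (M : SPair k m n) (hI : M.Indec)
    (hM : M.RelInjective) :
    M.A = ⊥ ∨ ∀ b : M.B, (X : Polynomial k) ^ m • b = 0 → b ∈ M.A := by
  let T : Submodule (Polynomial k) M.B :=
    LinearMap.ker (LinearMap.lsmul (Polynomial k) M.B (X ^ m))
  have hT : ∀ b, b ∈ T ↔ (X : Polynomial k) ^ m • b = 0 := fun b => Iff.rfl
  let N : SPair k m n :=
    { B := M.B × (M.B ⧸ M.A)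
      bound := by
        rintro ⟨b, c⟩
        obtain ⟨c, rfl⟩ := Submodule.Quotient.mk_surjective _ c
        rw [Prod.smul_mk, ← Submodule.Quotient.mk_smul, M.bound, M.bound]
        rfl
      A := T.map (LinearMap.inl (Polynomial k) M.B (M.B ⧸ M.A))
      subBound := by
        rintro _ ⟨a, ha, rfl⟩
        rw [← map_smul, (hT a).1 ha, map_zero] }
  let f : M.B →ₗ[Polynomial k] M.B × (M.B ⧸ M.A) := LinearMap.prod LinearMap.id M.A.mkQ
  have hf : Function.Injective f := fun x y h => congrArg Prod.fst h
  have hA : M.A.map f = N.A ⊓ LinearMap.range f := by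
    apply le_antisymm
    · rintro _ ⟨a, ha, rfl⟩
      refine ⟨⟨a, M.subBound a ha, ?_⟩, a, rfl⟩
      have : M.A.mkQ a = 0 := (Submodule.Quotient.mk_eq_zero _).2 ha
      exact Prod.ext rfl this.symm
    · rintro _ ⟨⟨a, ha, hab⟩, b, rfl⟩
      refine ⟨b, ?_, rfl⟩
      exact (Submodule.Quotient.mk_eq_zero _).1 (congrArg Prod.snd hab).symm
  obtain ⟨π, hπ, hπA⟩ := hM N f hf hA
  let g : Module.End (Polynomial k) M.B := π ∘ₗ LinearMap.inl (Polynomial k) M.B (M.B ⧸ M.A)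
  have hgT : ∀ b ∈ T, g b ∈ M.A := fun b hb => hπA ⟨_, ⟨b, hb, rfl⟩, rfl⟩
  have hgA : ∀ a ∈ M.A, g a = a := by
    intro a ha
    have h1 : π (f a) = a := LinearMap.congr_fun hπ a
    have h2 : f a = LinearMap.inl (Polynomial k) M.B (M.B ⧸ M.A) a :=
      Prod.ext rfl ((Submodule.Quotient.mk_eq_zero _).2 ha)
    rw [h2] at h1
    exact h1
  have : IsArtinian (Polynomial k) M.B := isArtinian_of_bound M.bound
  obtain ⟨r, hr, hr1⟩ := (g.eventually_isCompl_ker_pow_range_pow.and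
    (Filter.eventually_ge_atTop 1)).exists
  have hgr : ∀ j : ℕ, ∀ a ∈ M.A, (g ^ j) a = a := by
    intro j a ha
    induction j with
    | zero => rfl
    | succ j ih => rw [pow_succ, Module.End.mul_apply, hgA a ha, ih]
  have hAr : M.A ≤ LinearMap.range (g ^ r) := fun a ha => ⟨a, hgr r a ha⟩
  rcases hI.2 _ _ hr.inf_eq_bot hr.sup_eq_top (by
    rw [inf_eq_left.2 hAr]; exact (sup_eq_right.2 inf_le_left).symm) with h | h
  · right
    have hinj : Function.Injective (g ^ r) := LinearMap.ker_eq_bot.1 h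
    have hgi : Function.Injective g := by
      intro x y hxy
      apply hinj
      obtain ⟨s, rfl⟩ : ∃ s, r = s + 1 := ⟨r - 1, by omega⟩
      rw [pow_succ, Module.End.mul_apply, Module.End.mul_apply, hxy]
    intro b hb
    have h1 := hgT b hb
    have h2 := hgi (hgA _ h1)
    rwa [h2] at h1
  · left
    exact le_bot_iff.1 (h ▸ hAr)

end RelInjAux

/-- **Relatively injective objects of `Sₘ(k[T]/Tⁿ)`.**  With `R = k[X]/(Xⁿ)`, the objects
`(0 ⊆ R)` and `(Xⁿ⁻ᵐ·R ⊆ R)` are relatively injective, and conversely every indecomposable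
relatively injective object of `Sₘ(k[T]/Tⁿ)` is isomorphic to one of them. -/
theorem relatively_injective_objects (k : Type) [Field k] (m n : ℕ)
    (hm : 0 < m) (hmn : m ≤ n) :
    (pairZero k m n n le_rfl).RelInjective ∧
    (pairCyc k m n n (n - m) le_rfl (by omega)).RelInjective ∧
    (∀ M : SPair k m n, M.Indec → M.RelInjective →
      M.Iso (pairZero k m n n le_rfl) ∨ M.Iso (pairCyc k m n n (n - m) le_rfl (by omega))) := by
  have hn : 0 < n := by omega
  refine ⟨RelInjAux.zero_relInjective hn, RelInjAux.cyc_relInjective hn hmn _, ?_⟩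
  intro M hI hM
  obtain ⟨b, hb⟩ := RelInjAux.exists_maxOrder hn M hI.1 hM
  have hdich := RelInjAux.dichotomy M hI hM
  obtain ⟨D, hD⟩ := RelInjAux.exists_compl hn M.bound hb
  have hcompat : M.A = M.A ⊓ Submodule.span (Polynomial k) {b} ⊔ M.A ⊓ D := by
    rcases hdich with h | h
    · rw [h]; simp
    · refine le_antisymm ?_ (sup_le inf_le_left inf_le_left)
      intro a ha
      obtain ⟨s, hs, d, hd, rfl⟩ := Submodule.mem_sup.1
        (hD.sup_eq_top ▸ Submodule.mem_top : a ∈ Submodule.span (Polynomial k) {b} ⊔ D)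
      have h0 := M.subBound _ ha
      rw [smul_add] at h0
      have hs0 : (X : Polynomial k) ^ m • s = 0 := by
        refine Submodule.disjoint_def.1 hD.disjoint _ (Submodule.smul_mem _ _ hs) ?_
        rw [eq_neg_of_add_eq_zero_left h0]
        exact D.neg_mem (D.smul_mem _ hd)
      have hd0 : (X : Polynomial k) ^ m • d = 0 := by rwa [hs0, zero_add] at h0
      exact Submodule.add_mem_sup ⟨h _ hs0, hs⟩ ⟨h _ hd0, hd⟩
  have hDbot : D = ⊥ := by
    rcases hI.2 _ _ hD.inf_eq_bot hD.sup_eq_top hcompat with h | h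
    · rw [Submodule.span_singleton_eq_bot] at h
      exact absurd (by rw [h, smul_zero]) hb
    · exact h
  have htop : Submodule.span (Polynomial k) {b} = ⊤ := by
    have := hD.sup_eq_top
    rwa [hDbot, sup_bot_eq] at this
  have hbij : Function.Bijective (RelInjAux.toB (n := n) b (M.bound b)) := by
    constructor
    · rw [← LinearMap.ker_eq_bot, LinearMap.ker_eq_bot']
      intro x hx
      obtain ⟨p, rfl⟩ := Submodule.Quotient.mk_surjective _ x
      rw [RelInjAux.toB_mk] at hx
      rw [Submodule.Quotient.mk_eq_zero, Ideal.mem_span_singleton]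
      exact RelInjAux.dvd_of_smul_eq_zero (M.bound b) hb hx
    · intro y
      obtain ⟨p, hp⟩ := Submodule.mem_span_singleton.1
        (htop ▸ Submodule.mem_top : y ∈ Submodule.span (Polynomial k) {b})
      exact ⟨Submodule.Quotient.mk p, hp⟩
  let e : M.B ≃ₗ[Polynomial k] Bq k n := (LinearEquiv.ofBijective _ hbij).symm
  rcases hdich with h | h
  · left
    refine ⟨e, ?_⟩
    rw [h]
    exact Submodule.map_bot _
  · right
    refine ⟨e, le_antisymm ?_ ?_⟩
    · rintro _ ⟨a, ha, rfl⟩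
      refine RelInjAux.mem_span_of_smul hmn (e a) ?_
      rw [← map_smul, M.subBound a ha, map_zero]
    · intro x hx
      have hx0 : (X : Polynomial k) ^ m • (x : Bq k n) = 0 :=
        (pairCyc k m n n (n - m) le_rfl (by omega)).subBound x hx
      have hy : ∀ y : Bq k n, (X : Polynomial k) ^ m • y = 0 →
          (X : Polynomial k) ^ m • e.symm y = 0 := by
        intro y hy
        rw [← map_smul, hy, map_zero]
      exact ⟨e.symm x, h _ (hy x hx0), e.apply_symm_apply x⟩

end
end

section
/- Let k be a field, m ≤ n positive integers, R = k[X]/(X^n) and R_m = k[X]/(X^m), regarded as an R-module. The objects (0, R) and (R_m, R_m) of S_m(k[T]/T^n) are relatively projective, and conversely every indecomposable relatively projective object of S_m(k[T]/T^n) is isomorphic to (0, R) or to (R_m, R_m). -/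
open Polynomial

noncomputable section

/-- Relative projectivity in the exact category `Sₘ(k[T]/Tⁿ)`: every morphism into the
target of a deflation (an `R`-linear surjection `g : B' → B''` with `g(A') = A''`) lifts
along the deflation. -/
def SPair.RelProjective {k : Type} [Field k] {m n : ℕ} (M : SPair k m n) : Prop :=
  ∀ (N N' : SPair k m n) (g : N.B →ₗ[Polynomial k] N'.B),
    Function.Surjective g → N.A.map g = N'.A →
    ∀ h : M.B →ₗ[Polynomial k] N'.B, M.A.map h ≤ N'.A →
    ∃ h' : M.B →ₗ[Polynomial k] N.B, g ∘ₗ h' = h ∧ M.A.map h' ≤ N.A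

/-- The pair `(Rₘ ⊆ Rₘ)` with `Rₘ = k[X]/(Xᵐ)`, as an object of `Sₘ(k[T]/Tⁿ)`. -/
def pairRm (k : Type) [Field k] (m n : ℕ) (h : m ≤ n) : SPair k m n where
  B := Bq k m
  bound := fun b => Bq_bound k h b
  A := ⊤
  subBound := fun a _ => Bq_bound k le_rfl a

theorem aux_cyc {k : Type} [Field k] {V : Type} [AddCommGroup V] [Module (Polynomial k) V]
    (i : ℕ) (y : V) (hy : (X : Polynomial k) ^ i • y = 0) :
    ∃ φ : Bq k i →ₗ[Polynomial k] V,
      ∀ p : Polynomial k, φ (Submodule.Quotient.mk p) = p • y := by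
  refine ⟨Submodule.liftQ _ (LinearMap.toSpanSingleton (Polynomial k) V y) ?_, ?_⟩
  · intro p hp
    obtain ⟨c, rfl⟩ := Ideal.mem_span_singleton.mp hp
    rw [LinearMap.mem_ker, LinearMap.toSpanSingleton_apply, mul_comm, mul_smul, hy, smul_zero]
  · intro p
    rfl

theorem aux_ext {k : Type} [Field k] {V : Type} [AddCommGroup V] [Module (Polynomial k) V]
    (i : ℕ) (f g : Bq k i →ₗ[Polynomial k] V)
    (h : f (Submodule.Quotient.mk 1) = g (Submodule.Quotient.mk 1)) : f = g := by
  ext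
  exact h

theorem aux_cover {k : Type} [Field k] {V : Type} [AddCommGroup V] [Module (Polynomial k) V]
    (i : ℕ) (S : Submodule (Polynomial k) V) (hS : S.FG)
    (hb : ∀ a ∈ S, (X : Polynomial k) ^ i • a = 0) :
    ∃ (t : ℕ) (q : (Fin t → Bq k i) →ₗ[Polynomial k] V), LinearMap.range q = S := by
  obtain ⟨t, s, hs⟩ := Submodule.fg_iff_exists_fin_generating_family.mp hS
  have hmem : ∀ j, s j ∈ S := fun j => hs ▸ Submodule.subset_span ⟨j, rfl⟩
  choose φ hφ using fun j => aux_cyc i (s j) (hb _ (hmem j))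
  refine ⟨t, LinearMap.lsum (Polynomial k) (fun _ => Bq k i) (Polynomial k) φ, ?_⟩
  apply le_antisymm
  · rintro _ ⟨x, rfl⟩
    rw [LinearMap.lsum_apply, LinearMap.sum_apply]
    refine Submodule.sum_mem _ fun j _ => ?_
    rw [LinearMap.comp_apply]
    obtain ⟨p, hp⟩ := Submodule.Quotient.mk_surjective _ (LinearMap.proj (R := Polynomial k) j x)
    rw [← hp, hφ]
    exact S.smul_mem _ (hmem j)
  · rw [← hs, Submodule.span_le]
    rintro _ ⟨j, rfl⟩
    refine ⟨Pi.single j (Submodule.Quotient.mk 1), ?_⟩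
    rw [LinearMap.lsum_piSingle, hφ, one_smul]

theorem aux_split {k : Type} [Field k] {V : Type} [AddCommGroup V] [Module (Polynomial k) V]
    (i : ℕ) (f : V →ₗ[Polynomial k] Bq k i) (b : V) (hb : (X : Polynomial k) ^ i • b = 0)
    (hf : ∀ w : Bq k i, f b ≠ (X : Polynomial k) • w) :
    Submodule.span (Polynomial k) {b} ⊓ LinearMap.ker f = ⊥ ∧
    Submodule.span (Polynomial k) {b} ⊔ LinearMap.ker f = ⊤ ∧
    (∀ y, ∃ r : Polynomial k, y = f (r • b)) := by
  obtain ⟨c, hc⟩ := Submodule.Quotient.mk_surjective _ (f b)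
  have hXc : ¬ (X : Polynomial k) ∣ c := by
    rintro ⟨d, rfl⟩
    apply hf (Submodule.Quotient.mk d)
    rw [← hc, ← Submodule.Quotient.mk_smul, smul_eq_mul]
  have hcop : IsCoprime ((X : Polynomial k) ^ i) c :=
    IsCoprime.pow_left ((Polynomial.irreducible_X.coprime_iff_not_dvd).mpr hXc)
  have hsur : ∀ y, ∃ r : Polynomial k, y = f (r • b) := by
    intro y
    obtain ⟨q, rfl⟩ := Submodule.Quotient.mk_surjective _ y
    obtain ⟨u, w, huw⟩ := hcop
    refine ⟨q * w, ?_⟩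
    rw [map_smul, ← hc, ← Submodule.Quotient.mk_smul, Submodule.Quotient.eq]
    refine Ideal.mem_span_singleton.mpr ⟨q * u, ?_⟩
    rw [smul_eq_mul]
    linear_combination (-q) * huw
  refine ⟨?_, ?_, hsur⟩
  · rw [eq_bot_iff]
    rintro x ⟨hx1, hx2⟩
    obtain ⟨r, rfl⟩ := Submodule.mem_span_singleton.mp hx1
    rw [SetLike.mem_coe, LinearMap.mem_ker, map_smul, ← hc, ← Submodule.Quotient.mk_smul,
      Submodule.Quotient.mk_eq_zero, smul_eq_mul] at hx2
    obtain ⟨d, rfl⟩ := hcop.dvd_of_dvd_mul_right (Ideal.mem_span_singleton.mp hx2)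
    rw [Submodule.mem_bot, mul_comm, mul_smul, hb, smul_zero]
  · rw [eq_top_iff]
    intro x _
    obtain ⟨r, hr⟩ := hsur (f x)
    refine Submodule.mem_sup.mpr ⟨r • b, Submodule.smul_mem _ _
      (Submodule.mem_span_singleton_self b), x - r • b, ?_, by abel⟩
    rw [LinearMap.mem_ker, map_sub, hr, sub_self]

theorem aux_projZero (k : Type) [Field k] (m n : ℕ) :
    (pairZero k m n n le_rfl).RelProjective := by
  intro N N' g hg hgA h hh
  let h0 : Bq k n →ₗ[Polynomial k] N'.B := h
  obtain ⟨y, hy⟩ := hg (h0 (Submodule.Quotient.mk 1))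
  obtain ⟨φ, hφ⟩ := aux_cyc n y (N.bound y)
  refine ⟨φ, ?_, ?_⟩
  · refine aux_ext n (g ∘ₗ φ) h0 ?_
    rw [LinearMap.comp_apply, hφ, one_smul, hy]
  · rintro _ ⟨x, hx, rfl⟩
    have hx0 : φ x = 0 := (congrArg φ (show (x : Bq k n) = 0 from hx)).trans (map_zero φ)
    exact (congrArg (· ∈ N.A) hx0).mpr N.A.zero_mem

theorem aux_projRm (k : Type) [Field k] (m n : ℕ) (hmn : m ≤ n) :
    (pairRm k m n hmn).RelProjective := by
  intro N N' g hg hgA h hh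
  let h0 : Bq k m →ₗ[Polynomial k] N'.B := h
  have h1 : h0 (Submodule.Quotient.mk 1) ∈ N'.A :=
    hh ⟨(Submodule.Quotient.mk 1 : Bq k m), (Submodule.mem_top : _ ∈ (⊤ : Submodule (Polynomial k) (Bq k m))), rfl⟩
  rw [← hgA] at h1
  obtain ⟨y, hyA, hy⟩ := h1
  obtain ⟨φ, hφ⟩ := aux_cyc m y (N.subBound y hyA)
  refine ⟨φ, ?_, ?_⟩
  · refine aux_ext m (g ∘ₗ φ) h0 ?_
    rw [LinearMap.comp_apply, hφ, one_smul, hy]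
  · rintro _ ⟨x, hx, rfl⟩
    obtain ⟨p, rfl⟩ := Submodule.Quotient.mk_surjective _ x
    have := hφ p
    exact this ▸ N.A.smul_mem _ hyA

/-- The free pair `(0 ⊆ R)^s ⊕ (Rₘ ⊆ Rₘ)^t`. -/
def auxFree (k : Type) [Field k] (m n : ℕ) (hmn : m ≤ n) (s t : ℕ) : SPair k m n where
  B := (Fin s → Bq k n) × (Fin t → Bq k m)
  bound := fun b => Prod.ext (funext fun j => Bq_bound k le_rfl (b.1 j))
    (funext fun j => Bq_bound k hmn (b.2 j))
  A := LinearMap.ker (LinearMap.fst (Polynomial k) (Fin s → Bq k n) (Fin t → Bq k m))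
  subBound := fun a ha => Prod.ext
    (by
      have h : a.1 = 0 := ha
      rw [Prod.smul_fst, h, smul_zero]
      rfl)
    (funext fun j => Bq_bound k le_rfl (a.2 j))

/-- A relatively projective pair is a direct summand of a free pair. -/
theorem aux_summand {k : Type} [Field k] {m n : ℕ} (hmn : m ≤ n) (M : SPair k m n)
    (hM : M.RelProjective) :
    ∃ (s t : ℕ) (p : (Fin s → Bq k n) × (Fin t → Bq k m) →ₗ[Polynomial k] M.B)
      (ι : M.B →ₗ[Polynomial k] (Fin s → Bq k n) × (Fin t → Bq k m)),
      (∀ b, p (ι b) = b) ∧ (∀ v, p (0, v) ∈ M.A) ∧ (∀ a ∈ M.A, (ι a).1 = 0) := by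
  obtain ⟨s, q1, hq1⟩ := aux_cover n (⊤ : Submodule (Polynomial k) M.B)
    Module.Finite.fg_top (fun a _ => M.bound a)
  obtain ⟨t, q2, hq2⟩ := aux_cover m M.A (IsNoetherian.noetherian _) M.subBound
  have hp2 : ∀ v, q1.coprod q2 (0, v) = q2 v := fun v => by simp
  have hsurj : Function.Surjective (q1.coprod q2) := by
    intro y
    obtain ⟨u, hu⟩ : y ∈ LinearMap.range q1 := hq1 ▸ Submodule.mem_top
    exact ⟨(u, 0), by simp [hu]⟩
  have hA : (auxFree k m n hmn s t).A.map (q1.coprod q2) = M.A := by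
    apply le_antisymm
    · rintro _ ⟨⟨u, v⟩, hx, rfl⟩
      have hu : u = 0 := hx
      subst hu
      exact (hp2 v).symm ▸ hq2 ▸ ⟨v, rfl⟩
    · intro a ha
      rw [← hq2] at ha
      obtain ⟨v, rfl⟩ := ha
      exact ⟨(0, v), rfl, hp2 v⟩
  obtain ⟨ι, h1, h2⟩ := hM (auxFree k m n hmn s t) M (q1.coprod q2) hsurj hA LinearMap.id
    (by rw [Submodule.map_id])
  refine ⟨s, t, q1.coprod q2, ι, fun b => LinearMap.congr_fun h1 b, fun v => ?_, fun a ha => ?_⟩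
  · rw [hp2, ← hq2]
    exact ⟨v, rfl⟩
  · exact h2 ⟨a, ha, rfl⟩

theorem aux_conv {k : Type} [Field k] {m n : ℕ} (hmn : m ≤ n) (M : SPair k m n)
    (hI : M.Indec) (hM : M.RelProjective) :
    M.Iso (pairZero k m n n le_rfl) ∨ M.Iso (pairRm k m n hmn) := by
  obtain ⟨⟨b0, hb0⟩, hdec⟩ := hI
  obtain ⟨s, t, p, ι, hpι, hpA, hιA⟩ := aux_summand hmn M hM
  by_cases hcase : ∃ a ∈ M.A, ∀ w : M.B, a ≠ (X : Polynomial k) • w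
  · right
    obtain ⟨a, haA, ha⟩ := hcase
    obtain ⟨j, hj⟩ : ∃ j, ∀ w : Bq k m, (ι a).2 j ≠ (X : Polynomial k) • w := by
      by_contra! hcon
      choose w hw using hcon
      apply ha (p (0, w))
      rw [← map_smul, ← hpι a]
      congr 1
      refine Prod.ext ?_ (funext hw)
      rw [hιA a haA, Prod.smul_fst, smul_zero]
    let f : M.B →ₗ[Polynomial k] Bq k m :=
      LinearMap.proj j ∘ₗ LinearMap.snd (Polynomial k) (Fin s → Bq k n) (Fin t → Bq k m) ∘ₗ ι
    obtain ⟨h1, h2, h3⟩ := aux_split m f a (M.subBound a haA) hj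
    have hle : Submodule.span (Polynomial k) {a} ≤ M.A := by
      rw [Submodule.span_le, Set.singleton_subset_iff]
      exact haA
    have hd := hdec _ _ h1 h2 (by
      apply le_antisymm
      · intro x hx
        have hxt : x ∈ Submodule.span (Polynomial k) {a} ⊔ LinearMap.ker f :=
          h2 ▸ Submodule.mem_top
        obtain ⟨y, hy, z, hz, rfl⟩ := Submodule.mem_sup.mp hxt
        exact Submodule.mem_sup.mpr ⟨y, ⟨hle hy, hy⟩, z,
          ⟨(Submodule.add_mem_iff_right _ (hle hy)).mp hx, hz⟩, rfl⟩
      · exact sup_le inf_le_left inf_le_left)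
    have hker : LinearMap.ker f = ⊥ := by
      refine hd.resolve_left fun h => ?_
      rw [Submodule.span_singleton_eq_bot] at h
      exact ha 0 (by rw [h, smul_zero])
    have hbij : Function.Bijective f := ⟨LinearMap.ker_eq_bot.mp hker, fun y => by
      obtain ⟨r, hr⟩ := h3 y
      exact ⟨r • a, hr.symm⟩⟩
    refine ⟨LinearEquiv.ofBijective f hbij, ?_⟩
    change Submodule.map f M.A = ⊤
    rw [eq_top_iff]
    intro y _
    obtain ⟨r, hr⟩ := h3 y
    exact ⟨r • a, M.A.smul_mem _ haA, hr.symm⟩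
  · left
    push Not at hcase
    obtain ⟨b, hb⟩ : ∃ b : M.B, ∀ w : M.B, b ≠ (X : Polynomial k) • w := by
      by_contra! hcon
      have hall : ∀ (i : ℕ) (b : M.B), ∃ w : M.B, b = (X : Polynomial k) ^ i • w := by
        intro i
        induction i with
        | zero => exact fun b => ⟨b, by rw [pow_zero, one_smul]⟩
        | succ i ih =>
          intro b
          obtain ⟨w, hw⟩ := ih b
          obtain ⟨w', hw'⟩ := hcon w
          exact ⟨w', by rw [pow_succ, mul_smul, ← hw', hw]⟩
      obtain ⟨w, hw⟩ := hall n b0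
      exact hb0 (hw.trans (M.bound w))
    obtain ⟨j, hj⟩ : ∃ j, ∀ w : Bq k n, (ι b).1 j ≠ (X : Polynomial k) • w := by
      by_contra! hcon
      choose w hw using hcon
      obtain ⟨c, hc⟩ := hcase _ (hpA (ι b).2)
      apply hb (p (w, 0) + c)
      rw [smul_add, ← hc, ← map_smul, ← map_add]
      conv_lhs => rw [← hpι b]
      congr 1
      refine Prod.ext ?_ ?_
      · rw [Prod.fst_add, Prod.smul_fst, add_zero]
        exact funext hw
      · rw [Prod.snd_add, Prod.smul_snd, smul_zero, zero_add]
    let f : M.B →ₗ[Polynomial k] Bq k n :=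
      LinearMap.proj j ∘ₗ LinearMap.fst (Polynomial k) (Fin s → Bq k n) (Fin t → Bq k m) ∘ₗ ι
    have hfA : M.A ≤ LinearMap.ker f := by
      intro a ha
      exact congrFun (hιA a ha) j
    obtain ⟨h1, h2, h3⟩ := aux_split n f b (M.bound b) hj
    have hd := hdec _ _ h1 h2 (by
      apply le_antisymm
      · exact le_sup_of_le_right (le_inf le_rfl hfA)
      · exact sup_le inf_le_left inf_le_left)
    have hker : LinearMap.ker f = ⊥ := by
      refine hd.resolve_left fun h => ?_
      rw [Submodule.span_singleton_eq_bot] at h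
      exact hb 0 (by rw [h, smul_zero])
    have hbij : Function.Bijective f := ⟨LinearMap.ker_eq_bot.mp hker, fun y => by
      obtain ⟨r, hr⟩ := h3 y
      exact ⟨r • b, hr.symm⟩⟩
    refine ⟨LinearEquiv.ofBijective f hbij, ?_⟩
    change Submodule.map f M.A = ⊥
    rw [hker] at hfA
    rw [eq_bot_iff.mpr hfA, Submodule.map_bot]

/-- **Relatively projective objects of `Sₘ(k[T]/Tⁿ)`.**  With `R = k[X]/(Xⁿ)` and
`Rₘ = k[X]/(Xᵐ)`, the objects `(0 ⊆ R)` and `(Rₘ ⊆ Rₘ)` are relatively projective, and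
conversely every indecomposable relatively projective object of `Sₘ(k[T]/Tⁿ)` is isomorphic
to one of them. -/
theorem relatively_projective_objects (k : Type) [Field k] (m n : ℕ)
    (hm : 0 < m) (hmn : m ≤ n) :
    (pairZero k m n n le_rfl).RelProjective ∧
    (pairRm k m n hmn).RelProjective ∧
    (∀ M : SPair k m n, M.Indec → M.RelProjective →
      M.Iso (pairZero k m n n le_rfl) ∨ M.Iso (pairRm k m n hmn)) := by
  exact ⟨aux_projZero k m n, aux_projRm k m n hmn, fun M hI hM => aux_conv hmn M hI hM⟩

end
end

section
/- Let k be a field, m ≤ n positive integers, R = k[X]/(X^n), and let (f : A → B) be an object of the homomorphism category H_m(k[T]/T^n). (1) Let f̄ : A → im f be the corestriction of f; then the morphism (f̄, id_B) from (f : A → B) to the object (inclusion : im f → B) of S_m(k[T]/T^n) is a left S_m-approximation: every morphism in H_m(k[T]/T^n) from (f : A → B) to an object (ι : A' → B') with ι injective factors through (f̄, id_B). (2) Let I be a finite-dimensional injective R-module and e : A → I an R-linear map whose restriction to ker f is injective; then g = (f, e) : A → B ⊕ I is injective, so (g : A → B ⊕ I) is an object of S_m(k[T]/T^n), and the morphism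 (id_A, pr_B) from (g : A → B ⊕ I) to (f : A → B) is a right S_m-approximation: every morphism in H_m(k[T]/T^n) from an object (ι : A' → B') with ι injective to (f : A → B) factors through (id_A, pr_B). -/
open Polynomial

noncomputable section

/-- The ring `R = k[X]/(Xⁿ)`. -/
abbrev Rn (k : Type) [Field k] (n : ℕ) : Type :=
  Polynomial k ⧸ (Ideal.span {(X : Polynomial k) ^ n} : Ideal (Polynomial k))

/-- The image of `X` in `R = k[X]/(Xⁿ)`. -/
def xR (k : Type) [Field k] (n : ℕ) : Rn k n :=
  Ideal.Quotient.mk (Ideal.span {(X : Polynomial k) ^ n}) (X : Polynomial k)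

/-- **Minimal approximations in `H_m(k[T]/Tⁿ)` by objects of `Sₘ(k[T]/Tⁿ)`.**
Let `(f : A → B)` be an object of the homomorphism category `H_m(k[T]/Tⁿ)`, i.e. an
`R`-linear map between finite-dimensional `R`-modules with `Xᵐ • A = 0` (`R = k[X]/(Xⁿ)`).

(1) The corestriction `f̄ : A → im f` together with `id_B` is a morphism to the object
`(im f ⊆ B)` of `Sₘ(k[T]/Tⁿ)`, and it is a left `Sₘ`-approximation: every morphism of
`H_m(k[T]/Tⁿ)` from `(f : A → B)` to an object `(ι : A' → B')` with `ι` injective factors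
through it.

(2) If `I` is a finite-dimensional injective `R`-module and `e : A → I` restricts to an
injection on `ker f`, then `g = (f, e) : A → B ⊕ I` is injective — so `(g : A → B ⊕ I)` is
an object of `Sₘ(k[T]/Tⁿ)` — and the morphism `(id_A, pr_B)` from `(g : A → B ⊕ I)` to
`(f : A → B)` is a right `Sₘ`-approximation: every morphism of `H_m(k[T]/Tⁿ)` from an
object `(ι : A' → B')` with `ι` injective to `(f : A → B)` factors through it. -/
theorem approximations_in_Hm (k : Type) [Field k] (m n : ℕ) (hm : 0 < m) (hmn : m ≤ n)
    (A B : Type) [AddCommGroup A] [AddCommGroup B]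
    [Module (Rn k n) A] [Module (Rn k n) B]
    [Module.Finite (Rn k n) A] [Module.Finite (Rn k n) B]
    (hA : ∀ a : A, xR k n ^ m • a = 0)
    (f : A →ₗ[Rn k n] B) :
    -- (1) the left approximation
    ((LinearMap.range f).subtype ∘ₗ f.rangeRestrict = f ∧
      (∀ x ∈ LinearMap.range f, xR k n ^ m • x = 0) ∧
      (∀ (A' B' : Type) [AddCommGroup A'] [AddCommGroup B']
          [Module (Rn k n) A'] [Module (Rn k n) B']
          [Module.Finite (Rn k n) A'] [Module.Finite (Rn k n) B'],
        (∀ a : A', xR k n ^ m • a = 0) →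
        ∀ (ι : A' →ₗ[Rn k n] B'), Function.Injective ι →
        ∀ (α : A →ₗ[Rn k n] A') (β : B →ₗ[Rn k n] B'), ι ∘ₗ α = β ∘ₗ f →
        ∃ (α' : LinearMap.range f →ₗ[Rn k n] A') (β' : B →ₗ[Rn k n] B'),
          ι ∘ₗ α' = β' ∘ₗ (LinearMap.range f).subtype ∧
          α' ∘ₗ f.rangeRestrict = α ∧ β' ∘ₗ LinearMap.id = β)) ∧
    -- (2) the right approximation
    (∀ (I : Type) [AddCommGroup I] [Module (Rn k n) I]
        [Module.Finite (Rn k n) I] [Module.Injective (Rn k n) I],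
      ∀ e : A →ₗ[Rn k n] I, Function.Injective (e ∘ₗ (LinearMap.ker f).subtype) →
        Function.Injective (LinearMap.prod f e) ∧
        (∀ (A' B' : Type) [AddCommGroup A'] [AddCommGroup B']
            [Module (Rn k n) A'] [Module (Rn k n) B']
            [Module.Finite (Rn k n) A'] [Module.Finite (Rn k n) B'],
          (∀ a : A', xR k n ^ m • a = 0) →
          ∀ (ι : A' →ₗ[Rn k n] B'), Function.Injective ι →
          ∀ (α : A' →ₗ[Rn k n] A) (β : B' →ₗ[Rn k n] B), f ∘ₗ α = β ∘ₗ ι →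
          ∃ (α'' : A' →ₗ[Rn k n] A) (β'' : B' →ₗ[Rn k n] B × I),
            LinearMap.prod f e ∘ₗ α'' = β'' ∘ₗ ι ∧
            LinearMap.id ∘ₗ α'' = α ∧ LinearMap.fst (Rn k n) B I ∘ₗ β'' = β)) := by
  refine ⟨⟨rfl, ?_, ?_⟩, ?_⟩
  · rintro _ ⟨a, rfl⟩
    rw [← map_smul, hA, map_zero]
  · intro A' B' _ _ _ _ _ _ _ ι hι α β h
    have hr : ∀ x : LinearMap.range f,
        (β ∘ₗ (LinearMap.range f).subtype) x ∈ LinearMap.range ι := by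
      rintro ⟨_, a, rfl⟩
      exact ⟨α a, LinearMap.congr_fun h a⟩
    have key : ι ∘ₗ ((LinearEquiv.ofInjective ι hι).symm.toLinearMap ∘ₗ
        (β ∘ₗ (LinearMap.range f).subtype).codRestrict (LinearMap.range ι) hr) =
        β ∘ₗ (LinearMap.range f).subtype := by
      ext x
      exact congrArg Subtype.val ((LinearEquiv.ofInjective ι hι).apply_symm_apply
        ((β ∘ₗ (LinearMap.range f).subtype).codRestrict (LinearMap.range ι) hr x))
    refine ⟨_, β, key, ?_, rfl⟩
    refine LinearMap.ext fun a => hι ?_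
    exact (LinearMap.congr_fun key (f.rangeRestrict a)).trans (LinearMap.congr_fun h a).symm
  · intro I _ _ _ _ e he
    refine ⟨?_, ?_⟩
    · rw [injective_iff_map_eq_zero]
      intro a ha
      have h1 : f a = 0 := congrArg Prod.fst ha
      have h2 : e a = 0 := congrArg Prod.snd ha
      have h3 : (⟨a, h1⟩ : LinearMap.ker f) = 0 := he (by simpa using h2)
      exact congrArg Subtype.val h3
    · intro A' B' _ _ _ _ _ _ _ ι hι α β h
      obtain ⟨γ, hγ⟩ := Module.Injective.out ι hι (e ∘ₗ α)
      refine ⟨α, LinearMap.prod β γ, ?_, rfl, rfl⟩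
      refine LinearMap.ext fun a => Prod.ext ?_ ?_
      · exact LinearMap.congr_fun h a
      · exact (hγ a).symm
end
end
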